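/- Extended commutation: under these hypotheses, M_{α,n}·M_{β,n+p} = q^{p·min(α,β)}·M_{β,n+p}·M_{α,n} for all 0 ≤ α,β ≤ r+1 and all n,p ∈ ℤ with |p| ≤ |β−α|+1. -/

import Mathlib

/-!
If `x` `q`-commutes with the same exponent `c` with the rows `β - 1`, `β`, `β + 1` at time `m`, then
the right-hand side of the M-system, hence the product `M β (m + 1) * M β (m - 1)`, `q`-commutes
with `x` with exponent `2 * c`. Once the exponent of one factor is known, cancelling that factor
gives the exponent of the other. For `x = M α n` with `α ≤ β` this propagates the relation from
distances `k` and `k + 1` in time to distance `k + 2`, at the cost of one row on either side of `β`;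
the relations at distance `0` and `1` thus extend to distance `β - α + 1`. The truncation
`M (N + 1) = 0` makes the missing row above `N` harmless.
-/

theorem units_zpow_add_mul_mul {R : Type*} [Monoid R] {q : Rˣ} {y : R}
    (hq : Commute (q : R) y) (a b : ℤ) (z : R) :
    ((q ^ (a + b) : Rˣ) : R) * (y * z) = ((q ^ a : Rˣ) : R) * y * (((q ^ b : Rˣ) : R) * z) := by
  have hcomm : Commute ((q ^ b : Rˣ) : R) y := (hq.symm.units_zpow_right b).symm
  rw [zpow_add, Units.val_mul, hcomm.mul_mul_mul_comm]

/-- `x` and `y` commute up to the factor `q ^ a`, that is, `x * y = q ^ a * y * x`. It is phrased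
through `SemiconjBy` so that the library's closure properties apply. -/
def QCommute {R : Type*} [Monoid R] (q : Rˣ) (a : ℤ) (x y : R) : Prop :=
  SemiconjBy x y (((q ^ a : Rˣ) : R) * y)

namespace QCommute

section Monoid

variable {R : Type*} [Monoid R] {q : Rˣ} {a b : ℤ} {x y z : R}

theorem zero_iff_commute : QCommute q 0 x y ↔ Commute x y := by
  simp [QCommute, Commute]

theorem symm (h : QCommute q a x y) : QCommute q (-a) y x := by
  have hxy : x * y = ((q ^ a : Rˣ) : R) * (y * x) := h.eq.trans (mul_assoc _ _ _)
  change y * x = ((q ^ (-a) : Rˣ) : R) * x * y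
  rw [mul_assoc, hxy, zpow_neg, Units.inv_mul_cancel_left]

theorem mul_right (hq : Commute (q : R) y)
    (hy : QCommute q a x y) (hz : QCommute q b x z) : QCommute q (a + b) x (y * z) := by
  rw [QCommute, units_zpow_add_mul_mul hq]
  exact SemiconjBy.mul_right hy hz

theorem of_mul_right_of_right (hq : Commute (q : R) y) (hreg : IsRightRegular z)
    (hyz : QCommute q (a + b) x (y * z)) (hz : QCommute q b x z) : QCommute q a x y := by
  rw [QCommute, units_zpow_add_mul_mul hq] at hyz
  refine hreg ?_
  calc x * y * z
      = ((q ^ a : Rˣ) : R) * y * (((q ^ b : Rˣ) : R) * z) * x := by rw [mul_assoc, hyz.eq]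
    _ = ((q ^ a : Rˣ) : R) * y * x * z := by rw [mul_assoc, ← hz.eq, mul_assoc _ x]

theorem of_mul_right_of_left (hq : Commute (q : R) y) (hreg : IsLeftRegular y)
    (hyz : QCommute q (a + b) x (y * z)) (hy : QCommute q a x y) : QCommute q b x z := by
  rw [QCommute, units_zpow_add_mul_mul hq] at hyz
  refine ((q ^ a).isUnit.isRegular.left.mul hreg) ?_
  calc ((q ^ a : Rˣ) : R) * y * (x * z)
      = x * (y * z) := by rw [← mul_assoc, ← hy.eq, mul_assoc]
    _ = ((q ^ a : Rˣ) : R) * y * (((q ^ b : Rˣ) : R) * z * x) := by rw [hyz.eq, mul_assoc]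

end Monoid

section Ring

variable {R : Type*} [Ring R] {q : Rˣ} {a : ℤ} {x y z : R}

theorem zero_right : QCommute q a x 0 := by
  simp [QCommute]

theorem sub_right (hy : QCommute q a x y) (hz : QCommute q a x z) : QCommute q a x (y - z) := by
  rw [QCommute, mul_sub]
  exact SemiconjBy.sub_right hy hz

end Ring

end QCommute

/-- `M` solves the quantum M-system with rows `0, …, N`, truncated by `M (N + 1) = 0`, and
its entries at equal or consecutive times `q`-commute with exponent `0` or `min α β` respectively.
In the notation of the M-system of rank `r`, `N = r + 1`. The entries of rows `1, …, N` are regular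
instead of invertible, and `M 0` is an arbitrary boundary row instead of the constant `1`. -/
structure QuantumMSystem {R : Type*} [Ring R] (q : Rˣ) (N : ℕ) (M : ℕ → ℤ → R) : Prop where
  central : ∀ x : R, Commute (q : R) x
  top_eq_zero : ∀ n : ℤ, M (N + 1) n = 0
  isRegular : ∀ (α : ℕ) (n : ℤ), 1 ≤ α → α ≤ N → IsRegular (M α n)
  mutation : ∀ (α : ℕ) (n : ℤ), 1 ≤ α → α ≤ N →
    (q : R) ^ α * M α (n + 1) * M α (n - 1) = M α n ^ 2 - M (α + 1) n * M (α - 1) n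
  commutation : ∀ (α β ε : ℕ) (n : ℤ), ε ≤ 1 → α ≤ N → β ≤ N →
    M α n * M β (n + (ε : ℤ)) = (q : R) ^ (ε * min α β) * M β (n + (ε : ℤ)) * M α n

namespace QuantumMSystem

variable {R : Type*} [Ring R] {q : Rˣ} {N : ℕ} {M : ℕ → ℤ → R} {α β : ℕ}

theorem commute (h : QuantumMSystem q N M) (n : ℤ) (hα : α ≤ N) (hβ : β ≤ N) :
    Commute (M α n) (M β n) := by
  simpa [Commute, SemiconjBy] using h.commutation α β 0 n zero_le_one hα hβ

theorem qCommute_add_one (h : QuantumMSystem q N M) (n : ℤ) (hα : α ≤ N) (hβ : β ≤ N) :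
    QCommute q (min α β : ℕ) (M α n) (M β (n + 1)) := by
  rw [QCommute, zpow_natCast, Units.val_pow_eq_pow_val]
  simpa [SemiconjBy] using h.commutation α β 1 n le_rfl hα hβ

theorem qCommute_sub_one (h : QuantumMSystem q N M) (n : ℤ) (hα : α ≤ N) (hβ : β ≤ N) :
    QCommute q (-(min α β : ℕ)) (M α n) (M β (n - 1)) := by
  simpa [min_comm] using (h.qCommute_add_one (n - 1) hβ hα).symm

theorem qCommute_mul_of_adjacent_rows (h : QuantumMSystem q N M) {x : R} {c m : ℤ}
    (hβ1 : 1 ≤ β) (hβ : β ≤ N)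
    (hx : ∀ γ ≤ N, β ≤ γ + 1 → γ ≤ β + 1 → QCommute q c x (M γ m)) :
    QCommute q (c + c) x (M β (m + 1) * M β (m - 1)) := by
  have hsq : QCommute q (c + c) x (M β m ^ 2) := by
    have hself := hx β hβ (by lia) (by lia)
    simpa only [sq] using hself.mul_right (h.central _) hself
  have hadj : QCommute q (c + c) x (M (β + 1) m * M (β - 1) m) := by
    rcases hβ.eq_or_lt with rfl | hlt
    · rw [h.top_eq_zero, zero_mul]
      exact QCommute.zero_right
    · exact (hx (β + 1) hlt (by lia) le_rfl).mul_right (h.central _)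
        (hx (β - 1) (by lia) (by lia) (by lia))
  have hscaled : QCommute q (0 + (c + c)) x ((q : R) ^ β * (M β (m + 1) * M β (m - 1))) := by
    rw [zero_add, ← mul_assoc, h.mutation β m hβ1 hβ]
    exact hsq.sub_right hadj
  exact hscaled.of_mul_right_of_left (h.central _) (q.isUnit.pow β).isRegular.left
    (QCommute.zero_iff_commute.2 ((h.central x).pow_left β).symm)

theorem qCommute_add_natCast (h : QuantumMSystem q N M) (n : ℤ) (k : ℕ)
    (hαβ : α ≤ β) (hβ : β ≤ N) (hk : α + k ≤ β + 1) :
    QCommute q (k * α) (M α n) (M β (n + k)) := by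
  induction k using Nat.twoStepInduction generalizing β with
  | zero => simpa [QCommute.zero_iff_commute] using h.commute n (hαβ.trans hβ) hβ
  | one => simpa [hαβ] using h.qCommute_add_one n (hαβ.trans hβ) hβ
  | more k ih ih' =>
    have hprod := h.qCommute_mul_of_adjacent_rows (by lia) hβ
      fun γ hγ hβγ _ ↦ ih' (β := γ) (by lia) hγ (by lia)
    refine .of_mul_right_of_right (h.central _) (h.isRegular β (n + k) (by lia) hβ).right ?_
      (ih hαβ hβ (by lia))
    convert hprod using 1 <;> push_cast <;> ring_nf

theorem qCommute_sub_natCast (h : QuantumMSystem q N M) (n : ℤ) (k : ℕ)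
    (hαβ : α ≤ β) (hβ : β ≤ N) (hk : α + k ≤ β + 1) :
    QCommute q (-(k * α)) (M α n) (M β (n - k)) := by
  induction k using Nat.twoStepInduction generalizing β with
  | zero => simpa [QCommute.zero_iff_commute] using h.commute n (hαβ.trans hβ) hβ
  | one => simpa [hαβ] using h.qCommute_sub_one n (hαβ.trans hβ) hβ
  | more k ih ih' =>
    have hprod := h.qCommute_mul_of_adjacent_rows (by lia) hβ
      fun γ hγ hβγ _ ↦ ih' (β := γ) (by lia) hγ (by lia)
    refine .of_mul_right_of_left (h.central _) (h.isRegular β (n - k) (by lia) hβ).left ?_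
      (ih hαβ hβ (by lia))
    convert hprod using 1 <;> push_cast <;> ring_nf

theorem qCommute_of_le (h : QuantumMSystem q N M) (n p : ℤ)
    (hαβ : α ≤ β) (hβ : β ≤ N) (hp : |p| ≤ (β : ℤ) - α + 1) :
    QCommute q (p * α) (M α n) (M β (n + p)) := by
  obtain ⟨k, rfl | rfl⟩ := p.eq_nat_or_neg
  · exact h.qCommute_add_natCast n k hαβ hβ (by grind)
  · simpa [sub_eq_add_neg] using h.qCommute_sub_natCast n k hαβ hβ (by grind)

end QuantumMSystem

theorem quantum_Q_extended_commutation_general {R : Type*} [Ring R] {q : Rˣ} {N : ℕ}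
    {M : ℕ → ℤ → R} (h : QuantumMSystem q N M) (α β : ℕ) (n p : ℤ) (hα : α ≤ N) (hβ : β ≤ N)
    (hp : |p| ≤ |(β : ℤ) - (α : ℤ)| + 1) :
    M α n * M β (n + p)
      = ((q ^ (p * ((min α β : ℕ) : ℤ)) : Rˣ) : R) * M β (n + p) * M α n := by
  rcases le_total α β with hαβ | hβα
  · rw [min_eq_left hαβ]
    exact h.qCommute_of_le n p hαβ hβ (by grind)
  · have hswap : QCommute q (-p * β) (M β (n + p)) (M α (n + p + -p)) :=
      h.qCommute_of_le (n + p) (-p) hβα hα (by grind)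
    rw [add_neg_cancel_right] at hswap
    rw [min_eq_right hβα, ← neg_neg (p * (β : ℤ)), ← neg_mul]
    exact hswap.symm

theorem quantum_Q_extended_commutation
    {R : Type*} [Ring R] (q A Δ : Rˣ)
    (hq : ∀ x : R, (q : R) * x = x * (q : R))
    (r : ℕ) (hr : 1 ≤ r)
    (M Mi : ℕ → ℤ → R)
    (hM0 : ∀ n : ℤ, M 0 n = 1)
    (hMtop : ∀ n : ℤ, M (r + 2) n = 0)
    (hMiL : ∀ (α : ℕ) (n : ℤ), α ≤ r + 1 → M α n * Mi α n = 1)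
    (hMiR : ∀ (α : ℕ) (n : ℤ), α ≤ r + 1 → Mi α n * M α n = 1)
    (hMsys : ∀ (α : ℕ) (n : ℤ), 1 ≤ α → α ≤ r + 1 →
      (q : R) ^ α * M α (n + 1) * M α (n - 1) = M α n ^ 2 - M (α + 1) n * M (α - 1) n)
    (hcom : ∀ (α β ε : ℕ) (n : ℤ), ε ≤ 1 → α ≤ r + 1 → β ≤ r + 1 →
      M α n * M β (n + (ε : ℤ)) = (q : R) ^ (ε * min α β) * M β (n + (ε : ℤ)) * M α n)
    (hAΔ : ∀ n : ℤ, M (r + 1) n = ((A ^ n : Rˣ) : R) * (Δ : R))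
    (hΔM : ∀ (α : ℕ) (n : ℤ), 1 ≤ α → α ≤ r + 1 →
      (Δ : R) * M α n = ((q ^ ((α : ℤ) * n) : Rˣ) : R) * M α n * (Δ : R))
    (hAM : ∀ (α : ℕ) (n : ℤ), 1 ≤ α → α ≤ r + 1 →
      (A : R) * M α n = ((q ^ (-(α : ℤ)) : Rˣ) : R) * M α n * (A : R))
    (hΔA : (Δ : R) * (A : R) = (q : R) ^ (r + 1) * (A : R) * (Δ : R)) :
    ∀ (α β : ℕ) (n p : ℤ), α ≤ r + 1 → β ≤ r + 1 →
      |p| ≤ |(β : ℤ) - (α : ℤ)| + 1 →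
      M α n * M β (n + p)
        = ((q ^ (p * ((min α β : ℕ) : ℤ)) : Rˣ) : R) * M β (n + p) * M α n := by
  exact quantum_Q_extended_commutation_general ⟨hq, hMtop, fun α n _ hα ↦
    (Units.mk _ _ (hMiL α n hα) (hMiR α n hα)).isUnit.isRegular, hMsys, hcom⟩
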